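/- arXiv:1312.3527 — 2 statements merged into one kernel-verified Lean document; each statement's English description precedes it below -/
import Mathlib

section
/- Let n ≥ 3, let U ⊆ ℝⁿ be open, and let X¹, X² be the vector fields on U given by X¹(z) = (z₂, z₃, …, z_{n−1}, 0, 1) and X²(z) = e_{n−1} (the (n−1)-st standard basis vector). Let (F_k) and (G_k) be the Lie and derived flags of Δ = span_{C^∞(U)}{X¹, X²}. Then, for every 0 ≤ k ≤ n−2, F_k = G_k = span_{C^∞(U)}{X¹, E_{n−1}, E_{n−2}, …, E_{n−1−k}} (where E_j is the constant vector field with value e_j), and for every q ∈ U the vectors X¹(q), e_{n−1}, …, e_{n−1−k} are linearly independent, so that dim F_k(q) = dim G_k(q) = 2 + k. -/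
noncomputable section

/-- A vector field on (an open subset of) `ℝⁿ`, represented as a total map. -/
abbrev VF (n : ℕ) := (Fin n → ℝ) → (Fin n → ℝ)

/-- Lie bracket `[X,Y](x) = DY(x)(X(x)) − DX(x)(Y(x))`. -/
def lieBracket {n : ℕ} (X Y : VF n) : VF n :=
  fun x => fderiv ℝ Y x (X x) - fderiv ℝ X x (Y x)

/-- Span over `C^∞(U)` of a set of vector fields (membership only constrains values on `U`). -/
def spanOn {n : ℕ} (U : Set (Fin n → ℝ)) (S : Set (VF n)) : Set (VF n) :=
  { X | ∃ (m : ℕ) (c : Fin m → (Fin n → ℝ) → ℝ) (Y : Fin m → VF n),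
      (∀ i, ContDiffOn ℝ (⊤ : ℕ∞) (c i) U) ∧ (∀ i, Y i ∈ S) ∧
      ∀ x ∈ U, X x = ∑ i, c i x • Y i x }

/-- Sum of two distributions (as equality of values on `U`). -/
def addOn {n : ℕ} (U : Set (Fin n → ℝ)) (A B : Set (VF n)) : Set (VF n) :=
  { X | ∃ Y ∈ A, ∃ Z ∈ B, ∀ x ∈ U, X x = Y x + Z x }

/-- The set of brackets `[X,Y]`, `X ∈ A`, `Y ∈ B`. -/
def bracketSet {n : ℕ} (A B : Set (VF n)) : Set (VF n) :=
  { Z | ∃ X ∈ A, ∃ Y ∈ B, Z = lieBracket X Y }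

/-- The Lie flag: `F₀ = Δ`, `F_{k+1} = F_k + span_{C^∞(U)}{[X,Y] : X ∈ F_k, Y ∈ F₀}`. -/
def lieFlag {n : ℕ} (U : Set (Fin n → ℝ)) (Δ : Set (VF n)) : ℕ → Set (VF n)
  | 0 => Δ
  | k + 1 => addOn U (lieFlag U Δ k) (spanOn U (bracketSet (lieFlag U Δ k) Δ))

/-- The derived flag: `G₀ = Δ`, `G_{k+1} = G_k + span_{C^∞(U)}{[X,Y] : X, Y ∈ G_k}`. -/
def derivedFlag {n : ℕ} (U : Set (Fin n → ℝ)) (Δ : Set (VF n)) : ℕ → Set (VF n)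
  | 0 => Δ
  | k + 1 => addOn U (derivedFlag U Δ k)
      (spanOn U (bracketSet (derivedFlag U Δ k) (derivedFlag U Δ k)))

end

noncomputable section

/-- The chained-form vector field `X¹(z) = (z₂, z₃, …, z_{n−1}, 0, 1)`. -/
def chainedX1 (n : ℕ) : VF n :=
  fun z j => if h : j.1 + 3 ≤ n then z ⟨j.1 + 1, by omega⟩
             else if j.1 + 1 = n then 1 else 0

/-- The constant vector field with value `e_j`. -/
def constE (n : ℕ) (j : Fin n) : VF n := fun _ => Pi.single j (1 : ℝ)

/-- Componentwise description of the `k`-th distribution. -/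
def flagP (n : ℕ) (hn : 3 ≤ n) (U : Set (Fin n → ℝ)) (k : ℕ) : Set (VF n) :=
  { X | ContDiffOn ℝ (⊤ : ℕ∞) X U ∧ ∀ x ∈ U, ∀ i : Fin n, ∀ h : i.1 + k + 2 < n,
      X x i = X x ⟨n - 1, by omega⟩ * x ⟨i.1 + 1, by omega⟩ }

/-- The generating set. -/
def flagS (n : ℕ) (k : ℕ) : Set (VF n) :=
  {chainedX1 n} ∪ { X | ∃ j : Fin n, n ≤ j.1 + k + 2 ∧ j.1 + 2 ≤ n ∧ X = constE n j }

theorem flagS_zero (n : ℕ) (hn : 3 ≤ n) (hn2 : n - 2 < n) :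
    ({chainedX1 n, constE n ⟨n - 2, hn2⟩} : Set (VF n)) = flagS n 0 := by
  ext X
  simp only [flagS, Set.mem_insert_iff, Set.mem_singleton_iff, Set.mem_union, Set.mem_ofPred_eq]
  apply or_congr Iff.rfl
  constructor
  · rintro rfl
    exact ⟨⟨n - 2, hn2⟩, by simp; omega, by simp; omega, rfl⟩
  · rintro ⟨j, h1, h2, rfl⟩
    congr 1
    ext
    simp only
    omega

theorem chainedX1_contDiff (n : ℕ) : ContDiff ℝ (⊤ : ℕ∞) (chainedX1 n) := by
  rw [contDiff_pi]
  intro j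
  unfold chainedX1
  by_cases h : j.1 + 3 ≤ n
  · simp only [h, dite_true]
    exact contDiff_apply ℝ ℝ _
  · simp only [h, dite_false]
    exact contDiff_const

theorem chainedX1_last (n : ℕ) (hn : 3 ≤ n) (x : Fin n → ℝ) :
    chainedX1 n x ⟨n - 1, by omega⟩ = 1 := by
  unfold chainedX1
  rw [dif_neg (by simp only; omega), if_pos (by simp only; omega)]

theorem chainedX1_mem (n : ℕ) (hn : 3 ≤ n) (U : Set (Fin n → ℝ)) (k : ℕ) :
    chainedX1 n ∈ flagP n hn U k := by
  refine ⟨(chainedX1_contDiff n).contDiffOn, fun x _ i h => ?_⟩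
  rw [chainedX1_last n hn, one_mul]
  unfold chainedX1
  rw [dif_pos (by omega)]

theorem constE_mem (n : ℕ) (hn : 3 ≤ n) (U : Set (Fin n → ℝ)) (k : ℕ) (j : Fin n)
    (h1 : n ≤ j.1 + k + 2) (h2 : j.1 + 2 ≤ n) :
    constE n j ∈ flagP n hn U k := by
  refine ⟨contDiffOn_const, fun x _ i h => ?_⟩
  unfold constE
  rw [Pi.single_eq_of_ne, Pi.single_eq_of_ne, zero_mul]
  · intro hh; rw [← hh] at h2; simp only at h2; omega
  · rintro rfl; omega

theorem flagS_subset (n : ℕ) (hn : 3 ≤ n) (U : Set (Fin n → ℝ)) (k : ℕ) :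
    flagS n k ⊆ flagP n hn U k := by
  rintro X (rfl | ⟨j, h1, h2, rfl⟩)
  · exact chainedX1_mem n hn U k
  · exact constE_mem n hn U k j h1 h2

theorem flagP_mono (n : ℕ) (hn : 3 ≤ n) (U : Set (Fin n → ℝ)) {k l : ℕ} (h : k ≤ l) :
    flagP n hn U k ⊆ flagP n hn U l :=
  fun _ hX => ⟨hX.1, fun x hx i hi => hX.2 x hx i (by omega)⟩

theorem spanOn_subset (n : ℕ) (hn : 3 ≤ n) (U : Set (Fin n → ℝ)) (k : ℕ) (S : Set (VF n))
    (hS : S ⊆ flagP n hn U k) : spanOn U S ⊆ flagP n hn U k := by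
  rintro X ⟨m, c, Y, hc, hY, hX⟩
  constructor
  · refine ContDiffOn.congr (f := fun x => ∑ i, c i x • Y i x) ?_ hX
    exact ContDiffOn.sum fun i _ => (hc i).smul (hS (hY i)).1
  · intro x hx i h
    rw [hX x hx]
    simp only [Finset.sum_apply, Pi.smul_apply, smul_eq_mul, Finset.sum_mul]
    refine Finset.sum_congr rfl fun a _ => ?_
    rw [(hS (hY a)).2 x hx i h, mul_assoc]

theorem comp_smooth {n : ℕ} {U : Set (Fin n → ℝ)} {X : VF n}
    (hX : ContDiffOn ℝ (⊤ : ℕ∞) X U) (i : Fin n) :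
    ContDiffOn ℝ (⊤ : ℕ∞) (fun x => X x i) U :=
  (contDiffOn_pi.1 hX) i

theorem spanOn_flagS (n : ℕ) (hn : 3 ≤ n) (U : Set (Fin n → ℝ)) (k : ℕ) (hk : k + 2 ≤ n) :
    spanOn U (flagS n k) = flagP n hn U k := by
  refine Set.Subset.antisymm (spanOn_subset n hn U k _ (flagS_subset n hn U k)) ?_
  rintro X ⟨hs, hX⟩
  classical
  have hlast : n - 1 < n := by omega
  refine ⟨n, fun j x => if n ≤ j.1 + k + 2 ∧ j.1 + 2 ≤ n then
      X x j - X x ⟨n - 1, hlast⟩ * chainedX1 n x j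
      else if j = ⟨n - 1, hlast⟩ then X x j else 0,
    fun j => if n ≤ j.1 + k + 2 ∧ j.1 + 2 ≤ n then constE n j else chainedX1 n, ?_, ?_, ?_⟩
  · intro j
    dsimp only
    split_ifs
    · exact (comp_smooth hs _).sub ((comp_smooth hs _).mul
        (comp_smooth (chainedX1_contDiff n).contDiffOn _))
    · exact comp_smooth hs _
    · exact contDiffOn_const
  · intro j
    dsimp only
    split_ifs with h
    · exact Or.inr ⟨j, h.1, h.2, rfl⟩
    · exact Or.inl rfl
  · intro x hx
    have key : ∀ j : Fin n, ((if n ≤ j.1 + k + 2 ∧ j.1 + 2 ≤ n then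
        X x j - X x ⟨n - 1, hlast⟩ * chainedX1 n x j
        else if j = ⟨n - 1, hlast⟩ then X x j else 0) •
        (if n ≤ j.1 + k + 2 ∧ j.1 + 2 ≤ n then constE n j else chainedX1 n) x : Fin n → ℝ) =
        Pi.single j (X x j - X x ⟨n - 1, hlast⟩ * chainedX1 n x j) +
        (if j = ⟨n - 1, hlast⟩ then X x ⟨n - 1, hlast⟩ • chainedX1 n x else 0) := by
      intro j
      by_cases h : n ≤ j.1 + k + 2 ∧ j.1 + 2 ≤ n
      · have h' : j ≠ ⟨n - 1, hlast⟩ := by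
          intro hh; rw [hh] at h; simp only at h; omega
        rw [if_pos h, if_pos h, if_neg h', add_zero, constE, ← Pi.single_smul]
        simp
      · rw [if_neg h, if_neg h]
        by_cases h' : j = ⟨n - 1, hlast⟩
        · subst h'
          rw [if_pos rfl, if_pos rfl, chainedX1_last n hn]
          simp
        · have h3 : j.1 + k + 2 < n := by
            have : j.1 ≠ n - 1 := fun hh => h' (Fin.ext hh)
            have := j.2
            omega
          have h4 := hX x hx j h3
          have h5 := (chainedX1_mem n hn Set.univ k).2 x trivial j h3
          rw [chainedX1_last n hn, one_mul] at h5
          rw [if_neg h', if_neg h', h4, h5]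
          simp
    simp only [key]
    rw [Finset.sum_add_distrib, Finset.sum_ite_eq' Finset.univ, if_pos (Finset.mem_univ _),
      Finset.univ_sum_single (fun j => X x j - X x ⟨n - 1, hlast⟩ * chainedX1 n x j)]
    ext i
    simp

theorem fderiv_comp_apply {n : ℕ} {Y : VF n} {x v : Fin n → ℝ} (h : DifferentiableAt ℝ Y x)
    (i : Fin n) : fderiv ℝ Y x v i = fderiv ℝ (fun y => Y y i) x v := by
  rw [fderiv_apply h i]
  rfl

theorem fderiv_rel (n : ℕ) (hn : 3 ≤ n) (U : Set (Fin n → ℝ)) (hU : IsOpen U) (k : ℕ)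
    (Y : VF n) (hY : Y ∈ flagP n hn U k) (x : Fin n → ℝ) (hx : x ∈ U) (v : Fin n → ℝ)
    (i : Fin n) (h : i.1 + k + 2 < n) :
    fderiv ℝ Y x v i = fderiv ℝ Y x v ⟨n - 1, by omega⟩ * x ⟨i.1 + 1, by omega⟩ +
      Y x ⟨n - 1, by omega⟩ * v ⟨i.1 + 1, by omega⟩ := by
  have hd : DifferentiableAt ℝ Y x :=
    (hY.1.contDiffAt (hU.mem_nhds hx)).differentiableAt (by simp)
  rw [fderiv_comp_apply hd, fderiv_comp_apply hd]
  have he : (fun y => Y y i) =ᶠ[nhds x]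
      (fun y => Y y ⟨n - 1, by omega⟩ * y ⟨i.1 + 1, by omega⟩) := by
    filter_upwards [hU.mem_nhds hx] with y hy using hY.2 y hy i h
  rw [he.fderiv_eq]
  have h1 : HasFDerivAt (fun y => Y y ⟨n - 1, by omega⟩) (fderiv ℝ (fun y => Y y ⟨n - 1, by omega⟩) x) x :=
    (differentiableAt_pi.1 hd _).hasFDerivAt
  have h2 : HasFDerivAt (fun y : Fin n → ℝ => y ⟨i.1 + 1, by omega⟩)
      (ContinuousLinearMap.proj (R := ℝ) (φ := fun _ : Fin n => ℝ) ⟨i.1 + 1, by omega⟩) x :=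
    hasFDerivAt_apply _ _
  rw [(h1.fun_mul h2).fderiv]
  simp
  ring

theorem bracket_mem (n : ℕ) (hn : 3 ≤ n) (U : Set (Fin n → ℝ)) (hU : IsOpen U) (k : ℕ)
    (X Y : VF n) (hX : X ∈ flagP n hn U k) (hY : Y ∈ flagP n hn U k) :
    lieBracket X Y ∈ flagP n hn U (k + 1) := by
  constructor
  · have h : ∀ Z : VF n, ContDiffOn ℝ (⊤ : ℕ∞) Z U →
        ContDiffOn ℝ (⊤ : ℕ∞) (fderiv ℝ Z) U := fun Z hZ =>
      hZ.fderiv_of_isOpen hU (by simp)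
    exact ((h Y hY.1).clm_apply hX.1).sub ((h X hX.1).clm_apply hY.1)
  · intro x hx i hi
    simp only [lieBracket, Pi.sub_apply]
    rw [fderiv_rel n hn U hU k Y hY x hx _ i (by omega),
      fderiv_rel n hn U hU k X hX x hx _ i (by omega),
      hX.2 x hx ⟨i.1 + 1, by omega⟩ (by simp only; omega),
      hY.2 x hx ⟨i.1 + 1, by omega⟩ (by simp only; omega)]
    ring

theorem bracket_const (n : ℕ) (hn : 3 ≤ n) (j : Fin n) (hj : j.1 + 3 ≤ n) :
    lieBracket (constE n ⟨j.1 + 1, by omega⟩) (chainedX1 n) = constE n j := by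
  ext x i
  have hd : DifferentiableAt ℝ (chainedX1 n) x :=
    (chainedX1_contDiff n).contDiffAt.differentiableAt (by simp)
  have hc : fderiv ℝ (constE n ⟨j.1 + 1, by omega⟩) x = 0 := by
    unfold constE; simp
  simp only [lieBracket, hc, Pi.sub_apply, ContinuousLinearMap.zero_apply, Pi.zero_apply, sub_zero]
  rw [fderiv_comp_apply hd]
  unfold chainedX1 constE
  by_cases h : i.1 + 3 ≤ n
  · simp only [h, dite_true]
    have h2 : HasFDerivAt (fun y : Fin n → ℝ => y ⟨i.1 + 1, by omega⟩)
      (ContinuousLinearMap.proj (R := ℝ) (φ := fun _ : Fin n => ℝ) ⟨i.1 + 1, by omega⟩) x :=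
      hasFDerivAt_apply _ _
    rw [h2.fderiv]
    simp [Pi.single_apply, Fin.ext_iff]
  · simp only [h, dite_false]
    have : i ≠ j := by rintro rfl; exact h hj
    simp [Pi.single_apply, this]

theorem flag_step (n : ℕ) (hn : 3 ≤ n) (U : Set (Fin n → ℝ)) (hU : IsOpen U) (k : ℕ)
    (hk : k + 3 ≤ n) (B : Set (VF n)) (h0 : flagP n hn U 0 ⊆ B) (h1 : B ⊆ flagP n hn U k) :
    addOn U (flagP n hn U k) (spanOn U (bracketSet (flagP n hn U k) B)) =
      flagP n hn U (k + 1) := by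
  apply Set.Subset.antisymm
  · rintro X ⟨Y, hY, Z, hZ, hX⟩
    have hY' := flagP_mono n hn U (Nat.le_succ k) hY
    have hZ' : Z ∈ flagP n hn U (k + 1) := by
      refine spanOn_subset n hn U (k + 1) _ ?_ hZ
      rintro _ ⟨A, hA, C, hC, rfl⟩
      exact bracket_mem n hn U hU k A C hA (h1 hC)
    refine ⟨(hY'.1.add hZ'.1).congr hX, fun x hx i h => ?_⟩
    rw [hX x hx, Pi.add_apply, Pi.add_apply, hY'.2 x hx i h, hZ'.2 x hx i h]
    ring
  · rintro Z hZ
    have hj : n - 3 - k < n := by omega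
    let j : Fin n := ⟨n - 3 - k, hj⟩
    have hj3 : j.1 + 3 ≤ n := by simp only [j]; omega
    let c : (Fin n → ℝ) → ℝ := fun x =>
      Z x j - Z x ⟨n - 1, by omega⟩ * x ⟨j.1 + 1, by omega⟩
    have hc : ContDiffOn ℝ (⊤ : ℕ∞) c U :=
      (comp_smooth hZ.1 _).sub ((comp_smooth hZ.1 _).mul (contDiff_apply ℝ ℝ _).contDiffOn)
    have hl : (⟨n - 1, by omega⟩ : Fin n) ≠ j := by
      intro hh; have := congrArg Fin.val hh; simp only [j] at this; omega
    refine ⟨fun x => Z x - c x • constE n j x, ⟨?_, ?_⟩, fun x => c x • constE n j x,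
      ⟨1, fun _ => c, fun _ => constE n j, fun _ => hc, fun _ => ?_, fun x _ => by simp⟩,
      fun x _ => by simp⟩
    · exact hZ.1.sub (hc.smul contDiffOn_const)
    · intro x hx i hi
      simp only [Pi.sub_apply, Pi.smul_apply, smul_eq_mul, constE]
      rw [Pi.single_eq_of_ne hl, mul_zero, sub_zero]
      by_cases hij : i = j
      · subst hij
        simp only [Pi.single_eq_same, c]
        ring
      · rw [Pi.single_eq_of_ne hij, mul_zero, sub_zero]
        refine hZ.2 x hx i ?_
        have : i.1 ≠ n - 3 - k := fun hh => hij (Fin.ext hh)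
        omega
    · refine ⟨constE n ⟨j.1 + 1, by omega⟩, ?_, chainedX1 n, h0 (chainedX1_mem n hn U 0),
        (bracket_const n hn j hj3).symm⟩
      apply constE_mem <;> simp only [j] <;> omega

theorem lieFlag_eq (n : ℕ) (hn : 3 ≤ n) (U : Set (Fin n → ℝ)) (hU : IsOpen U) (k : ℕ)
    (hk : k + 2 ≤ n) : lieFlag U (flagP n hn U 0) k = flagP n hn U k := by
  induction k with
  | zero => rfl
  | succ k ih =>
    rw [lieFlag, ih (by omega)]
    exact flag_step n hn U hU k (by omega) _ subset_rfl (flagP_mono n hn U (Nat.zero_le k))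

theorem derivedFlag_eq (n : ℕ) (hn : 3 ≤ n) (U : Set (Fin n → ℝ)) (hU : IsOpen U) (k : ℕ)
    (hk : k + 2 ≤ n) : derivedFlag U (flagP n hn U 0) k = flagP n hn U k := by
  induction k with
  | zero => rfl
  | succ k ih =>
    rw [derivedFlag, ih (by omega)]
    exact flag_step n hn U hU k (by omega) _ (flagP_mono n hn U (Nat.zero_le k)) subset_rfl

theorem chained_linInd (n : ℕ) (hn : 3 ≤ n) (k : ℕ) (hk : k + 2 ≤ n)
    (hm : ∀ m : Fin (k + 2), n - 1 - m.1 < n) (q : Fin n → ℝ) :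
    LinearIndependent ℝ (fun m : Fin (k + 2) =>
          if m.1 = 0 then chainedX1 n q
          else Pi.single (⟨n - 1 - m.1, hm m⟩ : Fin n) (1 : ℝ)) := by
  rw [Fintype.linearIndependent_iff]
  intro g hg
  have h0 : g 0 = 0 := by
    have h := congrFun hg ⟨n - 1, by omega⟩
    rw [Finset.sum_apply, Finset.sum_eq_single 0] at h
    · simpa [chainedX1_last n hn] using h
    · intro m _ hne
      have hm' : m.1 ≠ 0 := fun hh => hne (Fin.ext hh)
      rw [if_neg hm', Pi.smul_apply, Pi.single_eq_of_ne, smul_zero]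
      intro hh
      have := congrArg Fin.val hh
      simp only at this
      omega
    · simp
  intro i
  by_cases hi : i = 0
  · rw [hi, h0]
  have hi' : i.1 ≠ 0 := fun hh => hi (Fin.ext hh)
  have h := congrFun hg ⟨n - 1 - i.1, hm i⟩
  rw [Finset.sum_apply, Finset.sum_eq_single i] at h
  · simpa [hi] using h
  · intro m _ hne
    by_cases hm0 : m = 0
    · rw [hm0, h0, zero_smul, Pi.zero_apply]
    have hm' : m.1 ≠ 0 := fun hh => hm0 (Fin.ext hh)
    rw [if_neg hm', Pi.smul_apply, Pi.single_eq_of_ne, smul_zero]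
    intro hh
    have h1 := congrArg Fin.val hh
    simp only at h1
    exact hne (Fin.ext (by omega))
  · simp

theorem chained_finrank (n : ℕ) (hn : 3 ≤ n) (U : Set (Fin n → ℝ)) (k : ℕ) (hk : k + 2 ≤ n)
    (hm : ∀ m : Fin (k + 2), n - 1 - m.1 < n) (q : Fin n → ℝ) (hq : q ∈ U) :
    Module.finrank ℝ ↥(Submodule.span ℝ { w | ∃ X ∈ spanOn U (flagS n k), w = X q }) = 2 + k := by
  have hli := chained_linInd n hn k hk hm q
  have hcard := finrank_span_eq_card hli
  rw [Fintype.card_fin] at hcard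
  rw [add_comm 2 k, ← hcard]
  have hgen : ∀ X ∈ flagS n k, X ∈ spanOn U (flagS n k) := fun X hX =>
    ⟨1, fun _ _ => 1, fun _ => X, fun _ => contDiffOn_const, fun _ => hX, fun x _ => by simp⟩
  suffices hs : Submodule.span ℝ { w | ∃ X ∈ spanOn U (flagS n k), w = X q } =
      Submodule.span ℝ (Set.range (fun m : Fin (k + 2) =>
          if m.1 = 0 then chainedX1 n q
          else Pi.single (⟨n - 1 - m.1, hm m⟩ : Fin n) (1 : ℝ))) by rw [hs]
  apply le_antisymm
  · rw [Submodule.span_le]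
    rintro _ ⟨X, ⟨m, c, Y, -, hY, hX⟩, rfl⟩
    rw [hX q hq]
    refine Submodule.sum_mem _ fun i _ => Submodule.smul_mem _ _ (Submodule.subset_span ?_)
    rcases hY i with h | ⟨j, h1, h2, h⟩
    · refine ⟨0, ?_⟩
      rw [h]
      simp
    · refine ⟨⟨n - 1 - j.1, by omega⟩, ?_⟩
      rw [h, constE]
      simp only
      rw [if_neg (by omega)]
      congr 1
      ext
      simp only
      omega
  · rw [Submodule.span_le]
    rintro _ ⟨m, rfl⟩
    apply Submodule.subset_span
    dsimp only
    split_ifs with h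
    · exact ⟨chainedX1 n, hgen _ (Or.inl rfl), rfl⟩
    · refine ⟨constE n ⟨n - 1 - m.1, hm m⟩, hgen _ (Or.inr ⟨_, ?_, ?_, rfl⟩), rfl⟩ <;>
        simp only <;> omega

/-- For the chained-form fields `X¹`, `X² = E_{n−1}` (1-based index,
0-based `n−2`), and `0 ≤ k ≤ n−2`:
`F_k = G_k = span_{C^∞(U)}{X¹, E_{n−1}, …, E_{n−1−k}}` (1-based indices, i.e. the constant
fields `e_j` for 0-based `n−2−k ≤ j ≤ n−2`), and at every `q ∈ U` the vectors
`X¹(q), e_{n−1}, …, e_{n−1−k}` are linearly independent, so `dim F_k(q) = dim G_k(q) = 2+k`. -/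
theorem flags_of_chained_fields (n : ℕ) (hn : 3 ≤ n) (U : Set (Fin n → ℝ)) (hU : IsOpen U) :
    ∀ k : ℕ, k + 2 ≤ n →
      lieFlag U (spanOn U {chainedX1 n, constE n ⟨n - 2, by omega⟩}) k =
        spanOn U ({chainedX1 n} ∪
          { X | ∃ j : Fin n, n ≤ j.1 + k + 2 ∧ j.1 + 2 ≤ n ∧ X = constE n j }) ∧
      derivedFlag U (spanOn U {chainedX1 n, constE n ⟨n - 2, by omega⟩}) k =
        spanOn U ({chainedX1 n} ∪
          { X | ∃ j : Fin n, n ≤ j.1 + k + 2 ∧ j.1 + 2 ≤ n ∧ X = constE n j }) ∧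
      ∀ q ∈ U,
        LinearIndependent ℝ (fun m : Fin (k + 2) =>
          if m.1 = 0 then chainedX1 n q
          else Pi.single (⟨n - 1 - m.1, by omega⟩ : Fin n) (1 : ℝ)) ∧
        Module.finrank ℝ ↥(Submodule.span ℝ
          { w | ∃ X ∈ lieFlag U (spanOn U {chainedX1 n, constE n ⟨n - 2, by omega⟩}) k,
              w = X q }) = 2 + k ∧
        Module.finrank ℝ ↥(Submodule.span ℝ
          { w | ∃ X ∈ derivedFlag U (spanOn U {chainedX1 n, constE n ⟨n - 2, by omega⟩}) k,
              w = X q }) = 2 + k := by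
  intro k hk
  rw [flagS_zero n hn (by omega)]
  change _ = spanOn U (flagS n k) ∧ _ = spanOn U (flagS n k) ∧ _
  have h1 : lieFlag U (spanOn U (flagS n 0)) k = spanOn U (flagS n k) := by
    rw [spanOn_flagS n hn U 0 (by omega), spanOn_flagS n hn U k hk, lieFlag_eq n hn U hU k hk]
  have h2 : derivedFlag U (spanOn U (flagS n 0)) k = spanOn U (flagS n k) := by
    rw [spanOn_flagS n hn U 0 (by omega), spanOn_flagS n hn U k hk, derivedFlag_eq n hn U hU k hk]
  rw [h1, h2]
  exact ⟨rfl, rfl, fun q hq => ⟨chained_linInd n hn k hk (fun m => by omega) q, chained_finrank n hn U k hk (fun m => by omega) q hq,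
    chained_finrank n hn U k hk (fun m => by omega) q hq⟩⟩

end
end

section
/- (Necessity in the main theorem.) Consider the system ẋ = f(x) + g₁(x)u₁ + g₂(x)u₂ on an open set U ⊆ ℝⁿ, n ≥ 2, with f, g₁, g₂ smooth, and let p ∈ U. Suppose the system is transformable into the triangular form (3) near p: there exist an open neighborhood V ⊆ U of p, a diffeomorphism φ : V → φ(V) ⊆ ℝⁿ, smooth maps α : V → ℝ² and β : V → ℝ^{2×2} with β(x) invertible for all x ∈ V, and smooth functions φ₁, …, φ_{n−2} with φᵢ depending only on the variables z₁, …, z_{i+1}, zₙ (for 1 ≤ i ≤ n−2), such that for all x ∈ V and all v ∈ ℝ²: Dφ(x)( f(x) + Σ_{i=1}^{2}(αᵢ(x) + Σ_{j=1}^{2} β_{ij}(x) vⱼ) gᵢ(x) ) = ( φ₁(z) + z₂v₁, φ₂(z) + z₃v₁, …, φ_{n−2}(z) + z_{n−1}v₁, v₂, v₁ ) with z = φ(x). Then there exists an open neighborhood W ⊆ U of p such that: (1) dim F_k(q) = dim G_k(q) = 2 + k for all 0 ≤ k ≤ n−2 and all q ∈ W, where (F_k), (G_k) are the Lie and derived flags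 of Δ = span_{C^∞(U)}{g₁, g₂}; and (2) (L_f ω)(q) ∈ Cᵏ_q for all 1 ≤ k ≤ n−3, all q ∈ W and all ω ∈ Λᵏ, where Λᵏ = (G_k)^⊥ and Cᵏ_q = C(Λᵏ)_q. -/
noncomputable section

/-- Covectors on `ℝⁿ`. -/
abbrev Covector (n : ℕ) := (Fin n → ℝ) →L[ℝ] ℝ

/-- A 1-form on (an open subset of) `ℝⁿ`, represented as a total map. -/
abbrev OneForm (n : ℕ) := (Fin n → ℝ) → Covector n

/-- The interior product `ι_v dω(q)`, i.e. the covector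
`w ↦ dω(q)(v,w) = (Dω(q)(v))(w) − (Dω(q)(w))(v)`. -/
def intExtDer {n : ℕ} (ω : OneForm n) (q v : Fin n → ℝ) : Covector n :=
  fderiv ℝ ω q v - (fderiv ℝ ω q).flip v

/-- The Lie derivative of a 1-form along a vector field:
`(L_X ω)(q)(v) = (Dω(q)(X(q)))(v) + ω(q)(DX(q)(v))`. -/
def lieDerOneForm {n : ℕ} (X : VF n) (ω : OneForm n) (q : Fin n → ℝ) : Covector n :=
  fderiv ℝ ω q (X q) + (ω q).comp (fderiv ℝ X q)

/-- The annihilator `A^⊥` of a set `A` of vector fields: the smooth 1-forms `ω` on `U`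
with `ω(x)(X(x)) = 0` for all `X ∈ A`, `x ∈ U`. -/
def annihilatorOn {n : ℕ} (U : Set (Fin n → ℝ)) (A : Set (VF n)) : Set (OneForm n) :=
  { ω | ContDiffOn ℝ (⊤ : ℕ∞) ω U ∧ ∀ X ∈ A, ∀ x ∈ U, ω x (X x) = 0 }

/-- The associated (Cauchy characteristic) space of a codistribution `Λ` at `q`. -/
def assocOf {n : ℕ} (Λ : Set (OneForm n)) (q : Fin n → ℝ) : Set (Fin n → ℝ) :=
  { v | ∀ ω ∈ Λ, ω q v = 0 ∧
      intExtDer ω q v ∈ Submodule.span ℝ { ξ : Covector n | ∃ ρ ∈ Λ, ξ = ρ q } }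

/-- The retracting space `C(Λ)_q`, the annihilator of the associated space. -/
def retractOf {n : ℕ} (Λ : Set (OneForm n)) (q : Fin n → ℝ) : Set (Covector n) :=
  { ξ | ∀ v ∈ assocOf Λ q, ξ v = 0 }

/-- `dim Δ(q)`: the dimension of `Δ_q = {X(q) : X ∈ Δ} ⊆ ℝⁿ`. -/
def evalDim {n : ℕ} (A : Set (VF n)) (q : Fin n → ℝ) : ℕ :=
  Module.finrank ℝ ↥(Submodule.span ℝ { w : Fin n → ℝ | ∃ X ∈ A, w = X q })

/-- The right-hand side of the triangular form (3), with 0-based components: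
component `j ≤ n−3` is `φ_{j+1}(z) + z_{j+2} v₁` (1-based), component `n−2` is `v₂` and
component `n−1` is `v₁`.  Here `Φ i` is the 1-based function `φ_{i+1}`. -/
def triRHS (n : ℕ) (Φ : ℕ → (Fin n → ℝ) → ℝ) (z : Fin n → ℝ) (v : Fin 2 → ℝ) :
    Fin n → ℝ :=
  fun j => if h : j.1 + 3 ≤ n then Φ j.1 z + z ⟨j.1 + 1, by omega⟩ * v 0
           else if j.1 + 2 = n then v 1 else v 0

/-- The system `ẋ = f + g₁u₁ + g₂u₂` is transformable into the triangular form (3)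
near `p`: on an open neighborhood `V ⊆ U` of `p` there are a diffeomorphism `φ` onto
`φ(V)` and a regular static state feedback `u = α + βv` such that the closed-loop
vector field is pushed forward by `φ` to the triangular form, where each `φᵢ = Φ (i-1)`
depends only on `z₁, …, z_{i+1}, zₙ`. -/
def IsTriangularizableAt (n : ℕ) (U : Set (Fin n → ℝ)) (f g1 g2 : VF n)
    (p : Fin n → ℝ) : Prop :=
  ∃ V : Set (Fin n → ℝ), IsOpen V ∧ p ∈ V ∧ V ⊆ U ∧
    ∃ φ ψ : (Fin n → ℝ) → (Fin n → ℝ),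
      ContDiffOn ℝ (⊤ : ℕ∞) φ V ∧ IsOpen (φ '' V) ∧ ContDiffOn ℝ (⊤ : ℕ∞) ψ (φ '' V) ∧
      (∀ x ∈ V, ψ (φ x) = x) ∧
      ∃ (α : (Fin n → ℝ) → Fin 2 → ℝ) (β : (Fin n → ℝ) → Fin 2 → Fin 2 → ℝ),
        (∀ i, ContDiffOn ℝ (⊤ : ℕ∞) (fun x => α x i) V) ∧
        (∀ i j, ContDiffOn ℝ (⊤ : ℕ∞) (fun x => β x i j) V) ∧
        (∀ x ∈ V, β x 0 0 * β x 1 1 - β x 0 1 * β x 1 0 ≠ 0) ∧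
        ∃ Φ : ℕ → (Fin n → ℝ) → ℝ,
          (∀ i, i + 3 ≤ n → ContDiffOn ℝ (⊤ : ℕ∞) (Φ i) (φ '' V)) ∧
          (∀ i, i + 3 ≤ n → ∀ z z' : Fin n → ℝ,
            (∀ j : Fin n, (j.1 ≤ i + 1 ∨ j.1 + 1 = n) → z j = z' j) → Φ i z = Φ i z') ∧
          ∀ x ∈ V, ∀ v : Fin 2 → ℝ,
            fderiv ℝ φ x (f x
                + (α x 0 + β x 0 0 * v 0 + β x 0 1 * v 1) • g1 x
                + (α x 1 + β x 1 0 * v 0 + β x 1 1 * v 1) • g2 x) =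
              triRHS n Φ (φ x) v

/-- Conditions 1) and 2) of the main theorem on the set `W`:
1) `dim F_k(q) = dim G_k(q) = 2 + k` for `0 ≤ k ≤ n−2`, `q ∈ W`;
2) `(L_f ω)(q) ∈ Cᵏ_q` for `1 ≤ k ≤ n−3`, `q ∈ W`, `ω ∈ Λᵏ = (G_k)^⊥`. -/
def MainConditionsOn (n : ℕ) (U W : Set (Fin n → ℝ)) (f g1 g2 : VF n) : Prop :=
  (∀ k : ℕ, k + 2 ≤ n → ∀ q ∈ W,
      evalDim (lieFlag U (spanOn U {g1, g2}) k) q = 2 + k ∧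
      evalDim (derivedFlag U (spanOn U {g1, g2}) k) q = 2 + k) ∧
  (∀ k : ℕ, 1 ≤ k → k + 3 ≤ n → ∀ q ∈ W,
      ∀ ω ∈ annihilatorOn U (derivedFlag U (spanOn U {g1, g2}) k),
        lieDerOneForm f ω q ∈
          retractOf (annihilatorOn U (derivedFlag U (spanOn U {g1, g2}) k)) q)

end

noncomputable section
open Filter Topology

theorem aux_smooth_span {n : ℕ} {U : Set (Fin n → ℝ)} {S : Set (VF n)}
    (hS : ∀ Y ∈ S, ContDiffOn ℝ (⊤ : ℕ∞) Y U) {X : VF n} (hX : X ∈ spanOn U S) :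
    ContDiffOn ℝ (⊤ : ℕ∞) X U := by
  obtain ⟨m, c, Y, hc, hY, h⟩ := hX
  refine ContDiffOn.congr (f := fun x => ∑ i, c i x • Y i x) ?_ h
  exact ContDiffOn.sum fun i _ => (hc i).smul (hS _ (hY i))

theorem aux_smooth_bracket {n : ℕ} {U : Set (Fin n → ℝ)} (hU : IsOpen U) {X Y : VF n}
    (hX : ContDiffOn ℝ (⊤ : ℕ∞) X U) (hY : ContDiffOn ℝ (⊤ : ℕ∞) Y U) :
    ContDiffOn ℝ (⊤ : ℕ∞) (lieBracket X Y) U := by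
  have h1 : ContDiffOn ℝ (⊤ : ℕ∞) (fderiv ℝ X) U := hX.fderiv_of_isOpen hU (by simp)
  have h2 : ContDiffOn ℝ (⊤ : ℕ∞) (fderiv ℝ Y) U := hY.fderiv_of_isOpen hU (by simp)
  exact (h2.clm_apply hX).sub (h1.clm_apply hY)

theorem aux_smooth_derived {n : ℕ} {U : Set (Fin n → ℝ)} (hU : IsOpen U) {Δ : Set (VF n)}
    (hΔ : ∀ Y ∈ Δ, ContDiffOn ℝ (⊤ : ℕ∞) Y U) (k : ℕ) :
    ∀ X ∈ derivedFlag U Δ k, ContDiffOn ℝ (⊤ : ℕ∞) X U := by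
  induction k with
  | zero => exact hΔ
  | succ k ih =>
    rintro X ⟨Y, hY, Z, hZ, h⟩
    refine ContDiffOn.congr (f := fun x => Y x + Z x) ?_ h
    refine (ih Y hY).add (aux_smooth_span ?_ hZ)
    rintro _ ⟨A, hA, B, hB, rfl⟩
    exact aux_smooth_bracket hU (ih A hA) (ih B hB)

theorem aux_zero_span {n : ℕ} (U : Set (Fin n → ℝ)) (S : Set (VF n)) :
    (fun _ => 0) ∈ spanOn U S :=
  ⟨0, fun i => i.elim0, fun i => i.elim0, fun i => i.elim0, fun i => i.elim0, by simp⟩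

theorem aux_self_span {n : ℕ} (U : Set (Fin n → ℝ)) (S : Set (VF n)) {X : VF n} (hX : X ∈ S) :
    X ∈ spanOn U S :=
  ⟨1, fun _ _ => 1, fun _ => X, fun _ => contDiffOn_const, fun _ => hX, by simp⟩

theorem aux_span_mono {n : ℕ} (U : Set (Fin n → ℝ)) {S T : Set (VF n)} (h : S ⊆ T) :
    spanOn U S ⊆ spanOn U T := by
  rintro X ⟨m, c, Y, hc, hY, h'⟩
  exact ⟨m, c, Y, hc, fun i => h (hY i), h'⟩

theorem aux_derived_succ {n : ℕ} (U : Set (Fin n → ℝ)) (Δ : Set (VF n)) (k : ℕ) :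
    derivedFlag U Δ k ⊆ derivedFlag U Δ (k + 1) :=
  fun X hX => ⟨X, hX, fun _ => 0, aux_zero_span _ _, by simp⟩

theorem aux_lie_succ {n : ℕ} (U : Set (Fin n → ℝ)) (Δ : Set (VF n)) (k : ℕ) :
    lieFlag U Δ k ⊆ lieFlag U Δ (k + 1) :=
  fun X hX => ⟨X, hX, fun _ => 0, aux_zero_span _ _, by simp⟩

theorem aux_derived_base {n : ℕ} (U : Set (Fin n → ℝ)) (Δ : Set (VF n)) (k : ℕ) :
    Δ ⊆ derivedFlag U Δ k := by
  induction k with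
  | zero => exact subset_rfl
  | succ k ih => exact ih.trans (aux_derived_succ U Δ k)

theorem aux_lie_derived {n : ℕ} (U : Set (Fin n → ℝ)) (Δ : Set (VF n)) (k : ℕ) :
    lieFlag U Δ k ⊆ derivedFlag U Δ k := by
  induction k with
  | zero => exact subset_rfl
  | succ k ih =>
    rintro X ⟨Y, hY, Z, hZ, h⟩
    refine ⟨Y, ih hY, Z, aux_span_mono U ?_ hZ, h⟩
    rintro _ ⟨A, hA, B, hB, rfl⟩
    exact ⟨A, ih hA, B, aux_derived_base U Δ k hB, rfl⟩

theorem aux_bump {n : ℕ} {V : Set (Fin n → ℝ)} (hV : IsOpen V) {q : Fin n → ℝ} (hq : q ∈ V) :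
    ∃ χ : (Fin n → ℝ) → ℝ, ContDiff ℝ (⊤ : ℕ∞) χ ∧ (∀ᶠ x in 𝓝 q, χ x = 1) ∧ tsupport χ ⊆ V := by
  obtain ⟨r, hr, h⟩ := Metric.nhds_basis_closedBall.mem_iff.1 (hV.mem_nhds hq)
  let b : ContDiffBump q := ⟨r / 2, r, by positivity, by linarith⟩
  exact ⟨b, b.contDiff, b.eventuallyEq_one, by rw [b.tsupport_eq]; exact h⟩

theorem aux_bump_smul {n : ℕ} {F : Type*} [NormedAddCommGroup F] [NormedSpace ℝ F]
    {V : Set (Fin n → ℝ)} (hV : IsOpen V)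
    {χ : (Fin n → ℝ) → ℝ} (hχ : ContDiff ℝ (⊤ : ℕ∞) χ) (hs : tsupport χ ⊆ V)
    {a : (Fin n → ℝ) → F} (ha : ContDiffOn ℝ (⊤ : ℕ∞) a V) :
    ContDiff ℝ (⊤ : ℕ∞) (fun x => χ x • a x) := by
  rw [contDiff_iff_contDiffAt]
  intro x
  by_cases hx : x ∈ tsupport χ
  · exact hχ.contDiffAt.smul (ha.contDiffAt (hV.mem_nhds (hs hx)))
  · have h0 := notMem_tsupport_iff_eventuallyEq.1 hx
    refine (contDiffAt_const (c := (0 : F))).congr_of_eventuallyEq ?_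
    filter_upwards [h0] with y hy
    simp [hy]

theorem aux_brk {n : ℕ} {φ : VF n} {x : Fin n → ℝ} (hφ : ContDiffAt ℝ (⊤ : ℕ∞) φ x)
    {X Y : VF n} (hX : DifferentiableAt ℝ X x) (hY : DifferentiableAt ℝ Y x) (j : Fin n) :
    fderiv ℝ φ x (lieBracket X Y x) j =
      fderiv ℝ (fun y => fderiv ℝ φ y (Y y) j) x (X x) -
      fderiv ℝ (fun y => fderiv ℝ φ y (X y) j) x (Y x) := by
  have hd : DifferentiableAt ℝ (fderiv ℝ φ) x :=
    (hφ.fderiv_right (m := 1) (by norm_cast)).differentiableAt (by simp)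
  have hsym : IsSymmSndFDerivAt ℝ φ x := hφ.isSymmSndFDerivAt (by simpa using WithTop.coe_le_coe.2 (le_top : (2 : ℕ∞) ≤ ⊤))
  have key : ∀ Z : VF n, DifferentiableAt ℝ Z x → ∀ w,
      fderiv ℝ (fun y => fderiv ℝ φ y (Z y) j) x w =
        fderiv ℝ φ x (fderiv ℝ Z x w) j + fderiv ℝ (fderiv ℝ φ) x w (Z x) j := by
    intro Z hZ w
    have h1 := hd.hasFDerivAt.clm_apply hZ.hasFDerivAt
    have h2 := (hasFDerivAt_pi'.1 h1) j
    rw [h2.fderiv]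
    simp
  rw [key Y hY, key X hX, hsym.eq (Y x) (X x)]
  simp [lieBracket]
end
noncomputable section
open Filter Topology

/-- The vector field `H` in the coordinates `z`. -/
def auxH (n : ℕ) (z : Fin n → ℝ) : Fin n → ℝ :=
  fun j => if h : j.1 + 3 ≤ n then z ⟨j.1 + 1, by omega⟩
           else if j.1 + 2 = n then 0 else 1

/-- Local data extracted from the triangular form. -/
structure AuxCore (n : ℕ) (U V : Set (Fin n → ℝ)) (f g1 g2 φ ψ : VF n)
    (Φ : ℕ → (Fin n → ℝ) → ℝ) (hn : 2 ≤ n) : Prop where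
  hU : IsOpen U
  hV : IsOpen V
  hVU : V ⊆ U
  hf : ContDiffOn ℝ (⊤ : ℕ∞) f U
  hg1 : ContDiffOn ℝ (⊤ : ℕ∞) g1 U
  hg2 : ContDiffOn ℝ (⊤ : ℕ∞) g2 U
  hφ : ContDiffOn ℝ (⊤ : ℕ∞) φ V
  hO : IsOpen (φ '' V)
  hψ : ContDiffOn ℝ (⊤ : ℕ∞) ψ (φ '' V)
  hinv : ∀ x ∈ V, ψ (φ x) = x
  hΦ : ∀ i, i + 3 ≤ n → ContDiffOn ℝ (⊤ : ℕ∞) (Φ i) (φ '' V)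
  hdep : ∀ i, i + 3 ≤ n → ∀ z z' : Fin n → ℝ,
            (∀ j : Fin n, (j.1 ≤ i + 1 ∨ j.1 + 1 = n) → z j = z' j) → Φ i z = Φ i z'
  ef : ∀ x ∈ V, ∀ i (h : i + 3 ≤ n), fderiv ℝ φ x (f x) ⟨i, by omega⟩ =
    Φ i (φ x) + φ x ⟨i + 1, by omega⟩ * fderiv ℝ φ x (f x) ⟨n - 1, by omega⟩
  eg1 : ∀ x ∈ V, ∀ i (h : i + 3 ≤ n), fderiv ℝ φ x (g1 x) ⟨i, by omega⟩ =
    φ x ⟨i + 1, by omega⟩ * fderiv ℝ φ x (g1 x) ⟨n - 1, by omega⟩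
  eg2 : ∀ x ∈ V, ∀ i (h : i + 3 ≤ n), fderiv ℝ φ x (g2 x) ⟨i, by omega⟩ =
    φ x ⟨i + 1, by omega⟩ * fderiv ℝ φ x (g2 x) ⟨n - 1, by omega⟩
  hH : ∃ a b : (Fin n → ℝ) → ℝ, ContDiffOn ℝ (⊤ : ℕ∞) a V ∧ ContDiffOn ℝ (⊤ : ℕ∞) b V ∧
    ∀ x ∈ V, fderiv ℝ φ x (a x • g1 x + b x • g2 x) = auxH n (φ x)
  hE : ∃ a b : (Fin n → ℝ) → ℝ, ContDiffOn ℝ (⊤ : ℕ∞) a V ∧ ContDiffOn ℝ (⊤ : ℕ∞) b V ∧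
    ∀ x ∈ V, fderiv ℝ φ x (a x • g1 x + b x • g2 x) = Pi.single ⟨n - 2, by omega⟩ 1

/-- The distribution `D_k` at a point. -/
def auxD {n : ℕ} (hn : 2 ≤ n) (φ : VF n) (k : ℕ) (x : Fin n → ℝ) : Submodule ℝ (Fin n → ℝ) where
  carrier := {v | ∀ i (h : i + k + 3 ≤ n), fderiv ℝ φ x v ⟨i, by omega⟩ =
    φ x ⟨i + 1, by omega⟩ * fderiv ℝ φ x v ⟨n - 1, by omega⟩}
  add_mem' := by
    intro a b ha hb i h
    simp only [map_add, Pi.add_apply, ha i h, hb i h]; ring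
  zero_mem' := by intro i h; simp
  smul_mem' := by
    intro c a ha i h
    simp only [map_smul, Pi.smul_apply, ha i h, smul_eq_mul]; ring

theorem aux_extract {n : ℕ} (hn : 2 ≤ n) (U : Set (Fin n → ℝ)) (hU : IsOpen U)
    (f g1 g2 : VF n)
    (hf : ContDiffOn ℝ (⊤ : ℕ∞) f U) (hg1 : ContDiffOn ℝ (⊤ : ℕ∞) g1 U)
    (hg2 : ContDiffOn ℝ (⊤ : ℕ∞) g2 U)
    (p : Fin n → ℝ) (htri : IsTriangularizableAt n U f g1 g2 p) :
    ∃ V φ ψ Φ, p ∈ V ∧ AuxCore n U V f g1 g2 φ ψ Φ hn := by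
  obtain ⟨V, hV, hpV, hVU, φ, ψ, hφ, hO, hψ, hinv, α, β, hα, hβ, hdet, Φ, hΦ, hdep, heq⟩ := htri
  have hsol : ∀ x ∈ V, ∀ u1 u2 : ℝ, ∃ v : Fin 2 → ℝ,
      fderiv ℝ φ x (f x + u1 • g1 x + u2 • g2 x) = triRHS n Φ (φ x) v := by
    intro x hx u1 u2
    have hd := hdet x hx
    set d := β x 0 0 * β x 1 1 - β x 0 1 * β x 1 0 with hdd
    refine ⟨![(β x 1 1 * (u1 - α x 0) - β x 0 1 * (u2 - α x 1)) / d,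
      (β x 0 0 * (u2 - α x 1) - β x 1 0 * (u1 - α x 0)) / d], ?_⟩
    rw [← heq x hx]
    congr 3
    · congr 1
      simp only [Matrix.cons_val_zero, Matrix.cons_val_one]
      field_simp
      rw [hdd]; ring
    · simp only [Matrix.cons_val_zero, Matrix.cons_val_one]
      field_simp
      rw [hdd]; ring
  have hcomp : ∀ x ∈ V, ∀ u1 u2 : ℝ, ∀ i (h : i + 3 ≤ n),
      fderiv ℝ φ x (f x + u1 • g1 x + u2 • g2 x) ⟨i, by omega⟩ =
    Φ i (φ x) + φ x ⟨i + 1, by omega⟩ *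
      fderiv ℝ φ x (f x + u1 • g1 x + u2 • g2 x) ⟨n - 1, by omega⟩ := by
    intro x hx u1 u2 i h
    obtain ⟨v, hv⟩ := hsol x hx u1 u2
    rw [hv]
    have h1 : ¬ (n - 1 + 3 ≤ n) := by omega
    have h2 : ¬ (n - 1 + 2 = n) := by omega
    simp [triRHS, h, h1, h2]
  have ef : ∀ x ∈ V, ∀ i (h : i + 3 ≤ n), fderiv ℝ φ x (f x) ⟨i, by omega⟩ =
    Φ i (φ x) + φ x ⟨i + 1, by omega⟩ * fderiv ℝ φ x (f x) ⟨n - 1, by omega⟩ := by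
    intro x hx i h
    simpa using hcomp x hx 0 0 i h
  have h0 : ∀ x ∈ V, fderiv ℝ φ x (f x + α x 0 • g1 x + α x 1 • g2 x) = triRHS n Φ (φ x) 0 := by
    intro x hx
    simpa using heq x hx 0
  refine ⟨V, φ, ψ, Φ, hpV, ⟨hU, hV, hVU, hf, hg1, hg2, hφ, hO, hψ, hinv, hΦ, hdep, ef, ?_, ?_, ?_, ?_⟩⟩
  · intro x hx i h
    have h1 := hcomp x hx 1 0 i h
    simp only [map_add, one_smul, zero_smul, add_zero, Pi.add_apply] at h1
    linear_combination h1 - ef x hx i h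
  · intro x hx i h
    have h1 := hcomp x hx 0 1 i h
    simp only [map_add, one_smul, zero_smul, add_zero, Pi.add_apply] at h1
    linear_combination h1 - ef x hx i h
  · refine ⟨fun x => β x 0 0, fun x => β x 1 0, hβ 0 0, hβ 1 0, fun x hx => ?_⟩
    have h1 := heq x hx ![1, 0]
    have h2 := h0 x hx
    have h3 : fderiv ℝ φ x (β x 0 0 • g1 x + β x 1 0 • g2 x) =
      triRHS n Φ (φ x) ![1, 0] - triRHS n Φ (φ x) 0 := by
      rw [← h1, ← h2, ← map_sub]
      congr 1
      simp only [Matrix.cons_val_zero, Matrix.cons_val_one]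
      module
    rw [h3]
    ext j
    simp only [triRHS, auxH, Pi.sub_apply]
    split_ifs <;> simp
  · refine ⟨fun x => β x 0 1, fun x => β x 1 1, hβ 0 1, hβ 1 1, fun x hx => ?_⟩
    have h1 := heq x hx ![0, 1]
    have h2 := h0 x hx
    have h3 : fderiv ℝ φ x (β x 0 1 • g1 x + β x 1 1 • g2 x) =
      triRHS n Φ (φ x) ![0, 1] - triRHS n Φ (φ x) 0 := by
      rw [← h1, ← h2, ← map_sub]
      congr 1
      simp only [Matrix.cons_val_zero, Matrix.cons_val_one]
      module
    rw [h3]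
    ext j
    simp only [triRHS, Pi.sub_apply, Pi.single_apply, Fin.ext_iff]
    split_ifs <;> first | omega | simp
end
noncomputable section
open Filter Topology

namespace AuxCore

variable {n : ℕ} {U V : Set (Fin n → ℝ)} {f g1 g2 φ ψ : VF n}
    {Φ : ℕ → (Fin n → ℝ) → ℝ} {hn : 2 ≤ n}

theorem dφ (C : AuxCore n U V f g1 g2 φ ψ Φ hn) {x : Fin n → ℝ} (hx : x ∈ V) :
    ContDiffAt ℝ (⊤ : ℕ∞) φ x := C.hφ.contDiffAt (C.hV.mem_nhds hx)

theorem left (C : AuxCore n U V f g1 g2 φ ψ Φ hn) {x : Fin n → ℝ} (hx : x ∈ V)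
    (v : Fin n → ℝ) : fderiv ℝ ψ (φ x) (fderiv ℝ φ x v) = v := by
  have h1 : DifferentiableAt ℝ φ x := (C.dφ hx).differentiableAt (by simp)
  have h2 : DifferentiableAt ℝ ψ (φ x) :=
    (C.hψ.contDiffAt (C.hO.mem_nhds ⟨x, hx, rfl⟩)).differentiableAt (by simp)
  have h3 := fderiv_comp x h2 h1
  have h4 : ψ ∘ φ =ᶠ[𝓝 x] id := by
    filter_upwards [C.hV.mem_nhds hx] with y hy
    exact C.hinv y hy
  rw [h4.fderiv_eq, fderiv_id] at h3
  exact (DFunLike.congr_fun h3 v).symm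

theorem inj (C : AuxCore n U V f g1 g2 φ ψ Φ hn) {x : Fin n → ℝ} (hx : x ∈ V) :
    Function.Injective (fderiv ℝ φ x) := fun a b h => by
  rw [← C.left hx a, h, C.left hx b]

theorem right (C : AuxCore n U V f g1 g2 φ ψ Φ hn) {x : Fin n → ℝ} (hx : x ∈ V)
    (w : Fin n → ℝ) : fderiv ℝ φ x (fderiv ℝ ψ (φ x) w) = w := by
  have hs : Function.Surjective (fderiv ℝ φ x) :=
    LinearMap.injective_iff_surjective (f := (fderiv ℝ φ x).toLinearMap).1 (C.inj hx)
  obtain ⟨v, rfl⟩ := hs w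
  rw [C.left hx]

theorem finrank_D (C : AuxCore n U V f g1 g2 φ ψ Φ hn) {x : Fin n → ℝ} (hx : x ∈ V)
    {k : ℕ} (hk : k + 2 ≤ n) : Module.finrank ℝ (auxD hn φ k x) = 2 + k := by
  let T : auxD hn φ k x →ₗ[ℝ] (Fin (k + 2) → ℝ) :=
    { toFun := fun v j => fderiv ℝ φ x v ⟨n - 2 - k + j.1, by omega⟩
      map_add' := by intro a b; ext j; simp
      map_smul' := by intro a b; ext j; simp }
  have hT : Function.Bijective T := by
    constructor
    · rintro ⟨a, ha⟩ ⟨b, hb⟩ hab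
      have key : ∀ j : Fin n, n < j.1 + k + 3 → fderiv ℝ φ x a j = fderiv ℝ φ x b j := by
        intro j hj
        have := congrFun hab ⟨j.1 - (n - 2 - k), by omega⟩
        have e : (⟨n - 2 - k + (j.1 - (n - 2 - k)), by omega⟩ : Fin n) = j := by
          ext; simp; omega
        simpa [T, e] using this
      have : fderiv ℝ φ x a = fderiv ℝ φ x b := by
        ext j
        by_cases hj : j.1 + k + 3 ≤ n
        · have h1 := ha j.1 hj
          have h2 := hb j.1 hj
          rw [key ⟨n - 1, by omega⟩ (by simp; omega)] at h1
          exact h1.trans h2.symm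
        · exact key j (by omega)
      exact Subtype.ext (C.inj hx this)
    · intro w
      let t : Fin n → ℝ := fun j => if h : j.1 + k + 3 ≤ n then
        φ x ⟨j.1 + 1, by omega⟩ * w ⟨k + 1, by omega⟩ else w ⟨j.1 - (n - 2 - k), by omega⟩
      refine ⟨⟨fderiv ℝ ψ (φ x) t, ?_⟩, ?_⟩
      · intro i h
        rw [C.right hx]
        have h1 : ¬ (n - 1 + k + 3 ≤ n) := by omega
        have h2 : (⟨n - 1 - (n - 2 - k), by omega⟩ : Fin (k + 2)) = ⟨k + 1, by omega⟩ := by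
          ext; simp; omega
        simp [t, h, h1, h2]
      · ext j
        change fderiv ℝ φ x (fderiv ℝ ψ (φ x) t) _ = _
        rw [C.right hx]
        have h1 : ¬ (n - 2 - k + j.1 + k + 3 ≤ n) := by omega
        simp [t, h1]
  rw [(LinearEquiv.ofBijective T hT).finrank_eq, Module.finrank_fin_fun]
  omega

theorem base_smooth (C : AuxCore n U V f g1 g2 φ ψ Φ hn) :
    ∀ Y ∈ spanOn U {g1, g2}, ContDiffOn ℝ (⊤ : ℕ∞) Y U := by
  intro Y hY
  refine aux_smooth_span ?_ hY
  rintro Z (rfl | rfl)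
  exacts [C.hg1, C.hg2]

theorem upper_bracket (C : AuxCore n U V f g1 g2 φ ψ Φ hn) {k : ℕ} {X Y : VF n}
    (sX : ContDiffOn ℝ (⊤ : ℕ∞) X V) (sY : ContDiffOn ℝ (⊤ : ℕ∞) Y V)
    (hX : ∀ x ∈ V, X x ∈ auxD hn φ k x) (hY : ∀ x ∈ V, Y x ∈ auxD hn φ k x)
    {x : Fin n → ℝ} (hx : x ∈ V) : lieBracket X Y x ∈ auxD hn φ (k + 1) x := by
  intro i h
  have hxn := C.hV.mem_nhds hx
  have dX : DifferentiableAt ℝ X x := (sX.contDiffAt hxn).differentiableAt (by simp)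
  have dY : DifferentiableAt ℝ Y x := (sY.contDiffAt hxn).differentiableAt (by simp)
  have hd : DifferentiableAt ℝ (fderiv ℝ φ) x :=
    ((C.dφ hx).fderiv_right (m := 1) (by norm_cast)).differentiableAt (by simp)
  have hd1 : DifferentiableAt ℝ φ x := (C.dφ hx).differentiableAt (by simp)
  rw [aux_brk (C.dφ hx) dX dY, aux_brk (C.dφ hx) dX dY]
  have key : ∀ Z : VF n, DifferentiableAt ℝ Z x → (∀ x ∈ V, Z x ∈ auxD hn φ k x) → ∀ w,
      fderiv ℝ (fun y => fderiv ℝ φ y (Z y) ⟨i, by omega⟩) x w =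
        φ x ⟨i + 1, by omega⟩ * fderiv ℝ (fun y => fderiv ℝ φ y (Z y) ⟨n - 1, by omega⟩) x w
        + fderiv ℝ φ x w ⟨i + 1, by omega⟩ * fderiv ℝ φ x (Z x) ⟨n - 1, by omega⟩ := by
    intro Z dZ hZ w
    have e : (fun y => fderiv ℝ φ y (Z y) ⟨i, by omega⟩) =ᶠ[𝓝 x]
        fun y => φ y ⟨i + 1, by omega⟩ * fderiv ℝ φ y (Z y) ⟨n - 1, by omega⟩ := by
      filter_upwards [hxn] with y hy
      exact hZ y hy i (by omega)
    have h1 : HasFDerivAt (fun y => φ y ⟨i + 1, by omega⟩)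
        ((ContinuousLinearMap.proj ⟨i + 1, by omega⟩).comp (fderiv ℝ φ x)) x :=
      hasFDerivAt_pi'.1 hd1.hasFDerivAt ⟨i + 1, by omega⟩
    have h2 : DifferentiableAt ℝ (fun y => fderiv ℝ φ y (Z y) ⟨n - 1, by omega⟩) x :=
      differentiableAt_pi.1 (hd.clm_apply dZ) ⟨n - 1, by omega⟩
    rw [e.fderiv_eq, (h1.fun_mul h2.hasFDerivAt).fderiv]
    simp
    ring
  rw [key X dX hX, key Y dY hY, hX x hx (i + 1) (by omega), hY x hx (i + 1) (by omega)]
  ring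

theorem auxD_mono (C : AuxCore n U V f g1 g2 φ ψ Φ hn) (k : ℕ) (x : Fin n → ℝ) :
    auxD hn φ k x ≤ auxD hn φ (k + 1) x := fun v hv i h => hv i (by omega)

theorem span_mem {x : Fin n → ℝ} (hx : x ∈ U) {S : Set (VF n)} {D : Submodule ℝ (Fin n → ℝ)}
    (hS : ∀ X ∈ S, X x ∈ D) {X : VF n} (hX : X ∈ spanOn U S) : X x ∈ D := by
  obtain ⟨m, c, Y, hc, hY, h⟩ := hX
  rw [h x hx]
  exact D.sum_mem fun i _ => D.smul_mem _ (hS _ (hY i))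

theorem upper (C : AuxCore n U V f g1 g2 φ ψ Φ hn) (k : ℕ) :
    ∀ X ∈ derivedFlag U (spanOn U {g1, g2}) k, ∀ x ∈ V, X x ∈ auxD hn φ k x := by
  induction k with
  | zero =>
    intro X hX x hx
    refine span_mem (C.hVU hx) ?_ hX
    rintro Z (rfl | rfl)
    · exact fun i h => C.eg1 x hx i h
    · exact fun i h => C.eg2 x hx i h
  | succ k ih =>
    rintro X ⟨Y, hY, Z, hZ, h⟩ x hx
    rw [h x (C.hVU hx)]
    refine Submodule.add_mem _ (C.auxD_mono k x (ih Y hY x hx)) (span_mem (C.hVU hx) ?_ hZ)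
    rintro _ ⟨A, hA, B, hB, rfl⟩
    have hs := aux_smooth_derived C.hU C.base_smooth k
    exact C.upper_bracket ((hs A hA).mono C.hVU) ((hs B hB).mono C.hVU) (ih A hA) (ih B hB) hx

theorem exists_base (C : AuxCore n U V f g1 g2 φ ψ Φ hn) {q : Fin n → ℝ} (hq : q ∈ V)
    {t : VF n} (ht : ∃ a b : (Fin n → ℝ) → ℝ, ContDiffOn ℝ (⊤ : ℕ∞) a V ∧
      ContDiffOn ℝ (⊤ : ℕ∞) b V ∧
      ∀ x ∈ V, fderiv ℝ φ x (a x • g1 x + b x • g2 x) = t x) :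
    ∃ X ∈ spanOn U {g1, g2}, ∀ᶠ x in 𝓝 q, fderiv ℝ φ x (X x) = t x := by
  obtain ⟨a, b, ha, hb, h⟩ := ht
  obtain ⟨χ, h1, h2, h3⟩ := aux_bump C.hV hq
  refine ⟨fun x => ∑ i : Fin 2, (![fun x => χ x • a x, fun x => χ x • b x] i x) • (![g1, g2] i) x,
    ⟨2, ![fun x => χ x • a x, fun x => χ x • b x], ![g1, g2], ?_, ?_, fun x _ => rfl⟩, ?_⟩
  · intro i
    fin_cases i
    · exact (aux_bump_smul C.hV h1 h3 ha).contDiffOn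
    · exact (aux_bump_smul C.hV h1 h3 hb).contDiffOn
  · intro i
    fin_cases i <;> simp
  · filter_upwards [h2, C.hV.mem_nhds hq] with x hx hxV
    rw [← h x hxV]
    simp [hx]

theorem exists_E (C : AuxCore n U V f g1 g2 φ ψ Φ hn) {q : Fin n → ℝ} (hq : q ∈ V)
    (k : ℕ) (hk : k + 2 ≤ n) :
    ∃ X ∈ lieFlag U (spanOn U {g1, g2}) k,
      ∀ᶠ x in 𝓝 q, fderiv ℝ φ x (X x) = Pi.single ⟨n - 2 - k, by omega⟩ 1 := by
  induction k with
  | zero => exact C.exists_base (t := fun _ => Pi.single ⟨n - 2, by omega⟩ 1) hq C.hE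
  | succ k ih =>
    obtain ⟨X, hX, eX⟩ := ih (by omega)
    obtain ⟨H, hH, eH⟩ := C.exists_base (t := fun x => auxH n (φ x)) hq C.hH
    refine ⟨lieBracket X H, ⟨fun _ => 0, ?_, lieBracket X H,
      aux_self_span _ _ ⟨X, hX, H, hH, rfl⟩, by simp⟩, ?_⟩
    · have : ∀ k, (fun _ => 0) ∈ lieFlag U (spanOn U {g1, g2}) k := by
        intro k
        induction k with
        | zero => exact aux_zero_span _ _
        | succ k ih => exact aux_lie_succ _ _ _ ih
      exact this k
    · have sX := aux_smooth_derived C.hU C.base_smooth k X (aux_lie_derived _ _ _ hX)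
      have sH := C.base_smooth H hH
      filter_upwards [C.hV.mem_nhds hq, eX.eventually_nhds, eH.eventually_nhds] with x hx e1 e2
      have hxn := C.hU.mem_nhds (C.hVU hx)
      have dX : DifferentiableAt ℝ X x := (sX.contDiffAt hxn).differentiableAt (by simp)
      have dH : DifferentiableAt ℝ H x := (sH.contDiffAt hxn).differentiableAt (by simp)
      have hd1 : DifferentiableAt ℝ φ x := (C.dφ hx).differentiableAt (by simp)
      ext j
      rw [aux_brk (C.dφ hx) dX dH]
      have f1 : (fun y => fderiv ℝ φ y (X y) j) =ᶠ[𝓝 x]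
          fun _ => (Pi.single ⟨n - 2 - k, by omega⟩ 1 : Fin n → ℝ) j := by
        filter_upwards [e1] with y hy
        rw [hy]
      have f2 : (fun y => fderiv ℝ φ y (H y) j) =ᶠ[𝓝 x] fun y => auxH n (φ y) j := by
        filter_upwards [e2] with y hy
        rw [hy]
      rw [f1.fderiv_eq, f2.fderiv_eq]
      by_cases hj : j.1 + 3 ≤ n
      · have h1 : HasFDerivAt (fun y => φ y ⟨j.1 + 1, by omega⟩)
            ((ContinuousLinearMap.proj ⟨j.1 + 1, by omega⟩).comp (fderiv ℝ φ x)) x :=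
          hasFDerivAt_pi'.1 hd1.hasFDerivAt ⟨j.1 + 1, by omega⟩
        simp only [auxH, hj, dif_pos]
        rw [h1.fderiv]
        simp only [ContinuousLinearMap.comp_apply, ContinuousLinearMap.proj_apply, e1.self_of_nhds]
        simp only [Pi.single_apply, Fin.ext_iff, fderiv_fun_const]
        have : j.1 + 1 = n - 2 - k ↔ j.1 = n - 2 - (k + 1) := by omega
        simp [this]
      · simp only [auxH, hj, dif_neg, not_false_iff, Pi.single_apply, Fin.ext_iff, fderiv_fun_const]
        have : ¬ (j.1 = n - 2 - (k + 1)) := by omega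
        simp [this]

theorem lower (C : AuxCore n U V f g1 g2 φ ψ Φ hn) {q : Fin n → ℝ} (hq : q ∈ V)
    (k : ℕ) (hk : k + 2 ≤ n) :
    auxD hn φ k q ≤
      Submodule.span ℝ {w | ∃ X ∈ lieFlag U (spanOn U {g1, g2}) k, w = X q} := by
  induction k with
  | zero =>
    intro v hv
    obtain ⟨X, hX, eX⟩ := C.exists_E hq 0 (by omega)
    obtain ⟨H, hH, eH⟩ := C.exists_base (t := fun x => auxH n (φ x)) hq C.hH
    have : v = fderiv ℝ φ q v ⟨n - 1, by omega⟩ • H q + fderiv ℝ φ q v ⟨n - 2, by omega⟩ • X q := by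
      apply C.inj hq
      rw [map_add, map_smul, map_smul, eX.self_of_nhds, eH.self_of_nhds]
      ext j
      by_cases hj : j.1 + 3 ≤ n
      · have h1 := hv j.1 hj
        have h2 : ¬ (j.1 = n - 2) := by omega
        simp only [Fin.eta] at h1
        rw [h1]
        simp [auxH, hj, Pi.single_apply, Fin.ext_iff, h2]
        ring
      · by_cases hj2 : j.1 + 2 = n
        · have : j = ⟨n - 2, by omega⟩ := by ext; simp; omega
          simp [auxH, hj, hj2]
          rw [this]; simp
        · have : j = ⟨n - 1, by omega⟩ := by ext; simp; omega
          have h2 : ¬ (j.1 = n - 2) := by omega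
          simp [auxH, hj, hj2, Pi.single_apply, Fin.ext_iff, h2]
          rw [this]
    rw [this]
    exact Submodule.add_mem _ (Submodule.smul_mem _ _ (Submodule.subset_span ⟨H, hH, rfl⟩))
      (Submodule.smul_mem _ _ (Submodule.subset_span ⟨X, hX, rfl⟩))
  | succ k ih =>
    intro v hv
    obtain ⟨X, hX, eX⟩ := C.exists_E hq (k + 1) (by omega)
    set c := fderiv ℝ φ q v ⟨n - 2 - (k + 1), by omega⟩ -
      φ q ⟨n - 2 - (k + 1) + 1, by omega⟩ * fderiv ℝ φ q v ⟨n - 1, by omega⟩ with hc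
    have h1 : v - c • X q ∈ auxD hn φ k q := by
      intro i h
      rw [map_sub, map_smul, eX.self_of_nhds]
      have h0 : ¬ (n - 1 = n - 2 - (k + 1)) := by omega
      simp only [Pi.sub_apply, Pi.smul_apply, Pi.single_apply, Fin.ext_iff, h0, if_false,
        smul_zero, sub_zero]
      by_cases hi : i + (k + 1) + 3 ≤ n
      · have h2 : ¬ (i = n - 2 - (k + 1)) := by omega
        simp [h2, hv i hi]
      · obtain rfl : i = n - 2 - (k + 1) := by omega
        simp [hc]
    have h2 := ih (by omega) h1
    have h3 : v = (v - c • X q) + c • X q := by simp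
    rw [h3]
    refine Submodule.add_mem _ (Submodule.span_mono ?_ h2)
      (Submodule.smul_mem _ _ (Submodule.subset_span ⟨X, hX, rfl⟩))
    rintro _ ⟨Y, hY, rfl⟩
    exact ⟨Y, aux_lie_succ _ _ _ hY, rfl⟩

theorem span_lie (C : AuxCore n U V f g1 g2 φ ψ Φ hn) {q : Fin n → ℝ} (hq : q ∈ V)
    (k : ℕ) (hk : k + 2 ≤ n) :
    Submodule.span ℝ {w | ∃ X ∈ lieFlag U (spanOn U {g1, g2}) k, w = X q} = auxD hn φ k q := by
  refine le_antisymm (Submodule.span_le.2 ?_) (C.lower hq k hk)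
  rintro _ ⟨Y, hY, rfl⟩
  exact C.upper k Y (aux_lie_derived _ _ _ hY) q hq

theorem span_derived (C : AuxCore n U V f g1 g2 φ ψ Φ hn) {q : Fin n → ℝ} (hq : q ∈ V)
    (k : ℕ) (hk : k + 2 ≤ n) :
    Submodule.span ℝ {w | ∃ X ∈ derivedFlag U (spanOn U {g1, g2}) k, w = X q} =
      auxD hn φ k q := by
  refine le_antisymm (Submodule.span_le.2 ?_) ((C.lower hq k hk).trans (Submodule.span_mono ?_))
  · rintro _ ⟨Y, hY, rfl⟩
    exact C.upper k Y hY q hq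
  · rintro _ ⟨Y, hY, rfl⟩
    exact ⟨Y, aux_lie_derived _ _ _ hY, rfl⟩

end AuxCore
end
noncomputable section
open Filter Topology

namespace AuxCore

/-- The contact form `dz_i - z_{i+1} dz_n`. -/
def lam {n : ℕ} (φ : VF n) (i : ℕ) (h : i + 3 ≤ n) : OneForm n := fun x =>
  (ContinuousLinearMap.proj (R := ℝ) (φ := fun _ : Fin n => ℝ) ⟨i, by omega⟩).comp (fderiv ℝ φ x) -
    φ x ⟨i + 1, by omega⟩ •
      (ContinuousLinearMap.proj (R := ℝ) (φ := fun _ : Fin n => ℝ) ⟨n - 1, by omega⟩).comp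
        (fderiv ℝ φ x)

theorem lam_apply {n : ℕ} {φ : VF n} (i : ℕ) (h : i + 3 ≤ n) (x v : Fin n → ℝ) :
    lam φ i h x v = fderiv ℝ φ x v ⟨i, by omega⟩ -
      φ x ⟨i + 1, by omega⟩ * fderiv ℝ φ x v ⟨n - 1, by omega⟩ := by
  simp [lam]

variable {n : ℕ} {U V : Set (Fin n → ℝ)} {f g1 g2 φ ψ : VF n}
    {Φ : ℕ → (Fin n → ℝ) → ℝ} {hn : 2 ≤ n}

theorem lam_smooth (C : AuxCore n U V f g1 g2 φ ψ Φ hn) (i : ℕ) (h : i + 3 ≤ n) :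
    ContDiffOn ℝ (⊤ : ℕ∞) (lam φ i h) V := by
  have h1 : ContDiffOn ℝ (⊤ : ℕ∞) (fderiv ℝ φ) V := C.hφ.fderiv_of_isOpen C.hV (by simp)
  have h2 : ContDiffOn ℝ (⊤ : ℕ∞) (fun x => φ x ⟨i + 1, by omega⟩) V :=
    contDiffOn_pi.1 C.hφ ⟨i + 1, by omega⟩
  exact (contDiffOn_const.clm_comp h1).sub (h2.smul (contDiffOn_const.clm_comp h1))

theorem lam_int (C : AuxCore n U V f g1 g2 φ ψ Φ hn) (i : ℕ) (h : i + 3 ≤ n)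
    {x : Fin n → ℝ} (hx : x ∈ V) (v w : Fin n → ℝ) :
    intExtDer (lam φ i h) x v w =
      fderiv ℝ φ x w ⟨i + 1, by omega⟩ * fderiv ℝ φ x v ⟨n - 1, by omega⟩ -
      fderiv ℝ φ x v ⟨i + 1, by omega⟩ * fderiv ℝ φ x w ⟨n - 1, by omega⟩ := by
  have hd : DifferentiableAt ℝ (fderiv ℝ φ) x :=
    ((C.dφ hx).fderiv_right (m := 1) (by norm_cast)).differentiableAt (by simp)
  have hd1 : DifferentiableAt ℝ φ x := (C.dφ hx).differentiableAt (by simp)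
  have hsym : IsSymmSndFDerivAt ℝ φ x := (C.dφ hx).isSymmSndFDerivAt
    (by simpa using WithTop.coe_le_coe.2 (le_top : (2 : ℕ∞) ≤ ⊤))
  have dl : DifferentiableAt ℝ (lam φ i h) x :=
    ((C.lam_smooth i h).contDiffAt (C.hV.mem_nhds hx)).differentiableAt (by simp)
  have key : ∀ a b, fderiv ℝ (lam φ i h) x a b =
      fderiv ℝ (fderiv ℝ φ) x a b ⟨i, by omega⟩
      - (φ x ⟨i + 1, by omega⟩ * fderiv ℝ (fderiv ℝ φ) x a b ⟨n - 1, by omega⟩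
        + fderiv ℝ φ x a ⟨i + 1, by omega⟩ * fderiv ℝ φ x b ⟨n - 1, by omega⟩) := by
    intro a b
    have e1 : HasFDerivAt (fun y => lam φ i h y b) _ x :=
      dl.hasFDerivAt.clm_apply (hasFDerivAt_const b x)
    have h0 := hd.hasFDerivAt.clm_apply (hasFDerivAt_const b x)
    have h1 := hasFDerivAt_pi'.1 h0 ⟨i, by omega⟩
    have h2 := hasFDerivAt_pi'.1 h0 ⟨n - 1, by omega⟩
    have h3 := hasFDerivAt_pi'.1 hd1.hasFDerivAt ⟨i + 1, by omega⟩
    have e2 := h1.fun_sub (h3.fun_mul h2)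
    simp only [lam_apply] at e1
    have := DFunLike.congr_fun (e1.unique e2) a
    simp at this
    rw [this]; ring
  simp only [intExtDer, sub_apply, ContinuousLinearMap.flip_apply, key]
  rw [hsym.eq w v]
  ring

theorem exists_form (C : AuxCore n U V f g1 g2 φ ψ Φ hn) {q : Fin n → ℝ} (hq : q ∈ V)
    (k i : ℕ) (h : i + k + 3 ≤ n) :
    ∃ ω ∈ annihilatorOn U (derivedFlag U (spanOn U {g1, g2}) k),
      ω =ᶠ[𝓝 q] lam φ i (by omega) := by
  obtain ⟨χ, h1, h2, h3⟩ := aux_bump C.hV hq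
  refine ⟨fun x => χ x • lam φ i (by omega) x,
    ⟨(aux_bump_smul C.hV h1 h3 (C.lam_smooth i (by omega))).contDiffOn, ?_⟩, ?_⟩
  · intro X hX x hx
    by_cases hxV : x ∈ V
    · have := C.upper k X hX x hxV i h
      rw [smul_apply, lam_apply, this]
      simp
    · have : χ x = 0 := by
        by_contra hne
        exact hxV (h3 (subset_tsupport _ hne))
      simp [this]
  · filter_upwards [h2] with x hx
    simp [hx]

theorem ann_D (C : AuxCore n U V f g1 g2 φ ψ Φ hn) {k : ℕ} (hk : k + 2 ≤ n) {ω : OneForm n}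
    (hω : ω ∈ annihilatorOn U (derivedFlag U (spanOn U {g1, g2}) k))
    {x : Fin n → ℝ} (hx : x ∈ V) {v : Fin n → ℝ} (hv : v ∈ auxD hn φ k x) : ω x v = 0 := by
  rw [← C.span_derived hx k hk] at hv
  induction hv using Submodule.span_induction with
  | mem a ha =>
    obtain ⟨X, hX, rfl⟩ := ha
    exact hω.2 X hX x (C.hVU hx)
  | zero => simp
  | add a b _ _ ha hb => simp [ha, hb]
  | smul c a _ ha => simp [ha]

theorem assoc_coord (C : AuxCore n U V f g1 g2 φ ψ Φ hn) {k : ℕ} (hk : k + 3 ≤ n)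
    {q : Fin n → ℝ} (hq : q ∈ V) {v : Fin n → ℝ}
    (hv : v ∈ assocOf (annihilatorOn U (derivedFlag U (spanOn U {g1, g2}) k)) q) :
    ∀ j : Fin n, (j.1 + k + 2 ≤ n ∨ j.1 + 1 = n) → fderiv ℝ φ q v j = 0 := by
  have hD : ∀ i (h : i + k + 3 ≤ n), fderiv ℝ φ q v ⟨i, by omega⟩ =
      φ q ⟨i + 1, by omega⟩ * fderiv ℝ φ q v ⟨n - 1, by omega⟩ := by
    intro i h
    obtain ⟨ω, hω, e⟩ := C.exists_form hq k i h
    have := (hv ω hω).1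
    rw [e.self_of_nhds, lam_apply] at this
    linarith
  obtain ⟨ω, hω, e⟩ := C.exists_form hq k (n - 3 - k) (by omega)
  have h1 := (hv ω hω).2
  have h2 : intExtDer ω q v = intExtDer (lam φ (n - 3 - k) (by omega)) q v := by
    simp only [intExtDer, e.fderiv_eq]
  rw [h2] at h1
  have h3 : ∀ w ∈ auxD hn φ k q, intExtDer (lam φ (n - 3 - k) (by omega)) q v w = 0 := by
    intro w hw
    generalize intExtDer (lam φ (n - 3 - k) (by omega)) q v = ξ at h1
    induction h1 using Submodule.span_induction with
    | mem a ha =>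
      obtain ⟨ρ, hρ, rfl⟩ := ha
      exact C.ann_D (by omega) hρ hq hw
    | zero => simp
    | add a b _ _ ha hb => simp [ha, hb]
    | smul c a _ ha => simp [ha]
  have hlast : fderiv ℝ φ q v ⟨n - 1, by omega⟩ = 0 := by
    have := h3 (fderiv ℝ ψ (φ q) (Pi.single ⟨n - 3 - k + 1, by omega⟩ 1)) ?_
    · rw [C.lam_int _ _ hq, C.right hq] at this
      have h0 : ¬ (n - 1 = n - 3 - k + 1) := by omega
      simpa [Pi.single_apply, Fin.ext_iff, h0] using this
    · intro i h
      rw [C.right hq]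
      have h0 : ¬ (n - 1 = n - 3 - k + 1) := by omega
      have h0' : ¬ (i = n - 3 - k + 1) := by omega
      simp [Pi.single_apply, Fin.ext_iff, h0, h0']
  have hmid : fderiv ℝ φ q v ⟨n - 3 - k + 1, by omega⟩ = 0 := by
    have h0 : ¬ (n - 1 + 3 ≤ n) := by omega
    have h0' : ¬ (n - 1 + 2 = n) := by omega
    have := h3 (fderiv ℝ ψ (φ q) (auxH n (φ q))) ?_
    · rw [C.lam_int _ _ hq, C.right hq, hlast] at this
      simpa [auxH, h0, h0'] using this
    · intro i h
      rw [C.right hq]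
      have h1 : i + 3 ≤ n := by omega
      simp [auxH, h0, h0', h1]
  rintro ⟨j, hj⟩ (h | h)
  · by_cases hj' : j + k + 3 ≤ n
    · rw [hD j hj', hlast, mul_zero]
    · have : (⟨j, hj⟩ : Fin n) = ⟨n - 3 - k + 1, by omega⟩ := by
        ext; simp at h ⊢; omega
      rw [this, hmid]
  · have : (⟨j, hj⟩ : Fin n) = ⟨n - 1, by omega⟩ := by
      ext; simp at h ⊢; omega
    rw [this, hlast]

theorem cond2 (C : AuxCore n U V f g1 g2 φ ψ Φ hn) {k : ℕ} (hk : k + 3 ≤ n)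
    {q : Fin n → ℝ} (hq : q ∈ V) {ω : OneForm n}
    (hω : ω ∈ annihilatorOn U (derivedFlag U (spanOn U {g1, g2}) k)) :
    lieDerOneForm f ω q ∈
      retractOf (annihilatorOn U (derivedFlag U (spanOn U {g1, g2}) k)) q := by
  intro v hv
  have hw := C.assoc_coord hk hq hv
  set w := fderiv ℝ φ q v with hwdef
  have hqn := C.hV.mem_nhds hq
  have hqU := C.hU.mem_nhds (C.hVU hq)
  let Y : VF n := fun x => fderiv ℝ ψ (φ x) w
  have Yq : Y q = v := C.left hq v
  have eY : ∀ x ∈ V, fderiv ℝ φ x (Y x) = w := fun x hx => C.right hx w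
  have dφ1 : DifferentiableAt ℝ φ q := (C.dφ hq).differentiableAt (by simp)
  have dY : DifferentiableAt ℝ Y q := by
    have h1 : ContDiffOn ℝ (⊤ : ℕ∞) (fderiv ℝ ψ) (φ '' V) := C.hψ.fderiv_of_isOpen C.hO (by simp)
    have h2 : DifferentiableAt ℝ (fderiv ℝ ψ) (φ q) :=
      (h1.contDiffAt (C.hO.mem_nhds ⟨q, hq, rfl⟩)).differentiableAt (by simp)
    exact (h2.comp q dφ1).clm_apply (differentiableAt_const w)
  have df : DifferentiableAt ℝ f q := (C.hf.contDiffAt hqU).differentiableAt (by simp)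
  have dω : DifferentiableAt ℝ ω q := (hω.1.contDiffAt hqU).differentiableAt (by simp)
  have hd : DifferentiableAt ℝ (fderiv ℝ φ) q :=
    ((C.dφ hq).fderiv_right (m := 1) (by norm_cast)).differentiableAt (by simp)
  -- `ω(Y) = 0` near `q`
  have z1 : (fun x => ω x (Y x)) =ᶠ[𝓝 q] fun _ => 0 := by
    filter_upwards [hqn] with x hx
    refine C.ann_D (by omega) hω hx ?_
    intro i h
    rw [eY x hx, hw _ (Or.inl (by simp; omega)), hw ⟨n - 1, _⟩ (Or.inr (by simp; omega)), mul_zero]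
  have z2 : fderiv ℝ ω q (f q) v + ω q (fderiv ℝ Y q (f q)) = 0 := by
    have h1 := (dω.hasFDerivAt.clm_apply dY.hasFDerivAt).fderiv
    rw [z1.fderiv_eq] at h1
    have h2 := DFunLike.congr_fun h1 (f q)
    simp [Yq] at h2
    linarith
  have z3 : lieBracket Y f q ∈ auxD hn φ k q := by
    intro i h
    rw [aux_brk (C.dφ hq) dY df, aux_brk (C.dφ hq) dY df]
    have c1 : ∀ j, fderiv ℝ (fun y => fderiv ℝ φ y (Y y) j) q (f q) = 0 := by
      intro j
      have : (fun y => fderiv ℝ φ y (Y y) j) =ᶠ[𝓝 q] fun _ => w j := by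
        filter_upwards [hqn] with x hx
        rw [eY x hx]
      rw [this.fderiv_eq]; simp
    rw [c1, c1, sub_zero, sub_zero, Yq]
    have e : (fun y => fderiv ℝ φ y (f y) ⟨i, by omega⟩) =ᶠ[𝓝 q]
        fun y => Φ i (φ y) + φ y ⟨i + 1, by omega⟩ * fderiv ℝ φ y (f y) ⟨n - 1, by omega⟩ := by
      filter_upwards [hqn] with x hx
      exact C.ef x hx i (by omega)
    have dΦ : DifferentiableAt ℝ (Φ i) (φ q) :=
      ((C.hΦ i (by omega)).contDiffAt (C.hO.mem_nhds ⟨q, hq, rfl⟩)).differentiableAt (by simp)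
    have h1 := dΦ.hasFDerivAt.comp q dφ1.hasFDerivAt
    have h2 : HasFDerivAt (fun y => φ y ⟨i + 1, by omega⟩)
        ((ContinuousLinearMap.proj ⟨i + 1, by omega⟩).comp (fderiv ℝ φ q)) q :=
      hasFDerivAt_pi'.1 dφ1.hasFDerivAt ⟨i + 1, by omega⟩
    have h3 : DifferentiableAt ℝ (fun y => fderiv ℝ φ y (f y) ⟨n - 1, by omega⟩) q :=
      differentiableAt_pi.1 (hd.clm_apply df) ⟨n - 1, by omega⟩
    have h4 : fderiv ℝ (Φ i) (φ q) w = 0 := by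
      have l1 : HasDerivAt (fun t : ℝ => φ q + t • w) w 0 := by
        simpa using ((hasDerivAt_id (0 : ℝ)).smul_const w).const_add (φ q)
      have l2 : HasFDerivAt (Φ i) (fderiv ℝ (Φ i) (φ q)) (φ q + (0 : ℝ) • w) := by
        simpa using dΦ.hasFDerivAt
      have l3 := l2.comp_hasDerivAt (0 : ℝ) l1
      have l4 : (Φ i ∘ fun t : ℝ => φ q + t • w) = fun _ => Φ i (φ q) := by
        ext t
        refine C.hdep i (by omega) _ _ ?_
        intro j hj
        have : w j = 0 := hw j (hj.imp (fun h' => by omega) id)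
        simp [this]
      rw [l4] at l3
      exact l3.unique (hasDerivAt_const _ _)
    have h5 := h1.fun_add (h2.fun_mul h3.hasFDerivAt)
    rw [e.fderiv_eq]
    have h6 := DFunLike.congr_fun h5.fderiv v
    have h7 : w ⟨i + 1, by omega⟩ = 0 := hw _ (Or.inl (by simp; omega))
    refine h6.trans ?_
    simp [← hwdef, h4, h7]
  have z4 := C.ann_D (by omega) hω hq z3
  simp only [lieBracket, map_sub, Yq] at z4
  simp only [lieDerOneForm, add_apply, ContinuousLinearMap.comp_apply]
  linarith

end AuxCore
end
noncomputable section

/-- **necessity in the main theorem.** If the system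
`ẋ = f(x) + g₁(x)u₁ + g₂(x)u₂` is transformable into the triangular form (3) near `p ∈ U`,
then there exists an open neighborhood `W ⊆ U` of `p` on which conditions 1) and 2)
of the main theorem hold. -/
theorem main_theorem_necessity {n : ℕ} (hn : 2 ≤ n) (U : Set (Fin n → ℝ)) (hU : IsOpen U)
    (f g1 g2 : VF n)
    (hf : ContDiffOn ℝ (⊤ : ℕ∞) f U) (hg1 : ContDiffOn ℝ (⊤ : ℕ∞) g1 U) (hg2 : ContDiffOn ℝ (⊤ : ℕ∞) g2 U)
    (p : Fin n → ℝ) (hp : p ∈ U)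
    (htri : IsTriangularizableAt n U f g1 g2 p) :
    ∃ W : Set (Fin n → ℝ), IsOpen W ∧ p ∈ W ∧ W ⊆ U ∧
      MainConditionsOn n U W f g1 g2 := by
  obtain ⟨V, φ, ψ, Φ, hpV, C⟩ := aux_extract hn U hU f g1 g2 hf hg1 hg2 p htri
  refine ⟨V, C.hV, hpV, C.hVU, ?_, ?_⟩
  · intro k hk q hq
    exact ⟨by rw [evalDim, C.span_lie hq k hk, C.finrank_D hq hk],
      by rw [evalDim, C.span_derived hq k hk, C.finrank_D hq hk]⟩
  · intro k _ hk q hq ω hω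
    exact C.cond2 hk hq hω

end
end
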